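/- Let α, β ∈ (0,1] and let E ⊆ ℝ² be an F_{αβ}-set. Then the Hausdorff dimension of E satisfies dim_H(E) ≥ max{α + β/2, 2α + β − 1}. -/

import Mathlib

/-!
STATEMENT 0: Let `α, β ∈ (0,1]` and let `E ⊆ ℝ²` be an `F_{αβ}`-set, i.e. there is a
subset `L` of the unit circle with `dim_H(L) ≥ β` such that for each direction `e ∈ L`
there is a line segment `ℓ_e` in the direction of `e` with `dim_H(E ∩ ℓ_e) ≥ α`.
Then `dim_H(E) ≥ max {α + β/2, 2α + β − 1}`.
-/

open Metric Set MeasureTheory ENNReal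

noncomputable section

abbrev E2 := EuclideanSpace ℝ (Fin 2)

/-- `ℓ` is a line segment in the direction of `e`. -/
def IsSegment (ℓ : Set E2) (e : E2) : Prop :=
  ∃ (p : E2) (a b : ℝ), a ≤ b ∧ ℓ = (fun t : ℝ => p + t • e) '' Set.Icc a b

/-!
Suppose `dim E < s` and cover `E` by balls of dyadic radii with `∑ r ^ s ≤ 1`. Some scale `δ` then
carries a proportion `κ`, polynomial in `1 / log (1 / δ)`, of the set of directions and of every
slice `E ∩ ℓ_e` in those directions: there are `|Q| ≤ δ⁻ˢ` points and `N ≳ δ⁻ᵇ` directions, pairwise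
`δ`-separated, such that every slice needs `M ≳ δ⁻ᵃ` of the points.

* A slice contains `≳ M ^ 2` pairs of points far from each other, and such a pair determines the
  direction of its line up to `O(δ)`. Hence `N * M ^ 2 ≲ |Q| ^ 2`, that is, `s ≥ a + b / 2`.
* In the plane, two slices at angle `θ` share `≲ 1 / max δ θ` points, and `≲ 2 ^ i` of the
  directions lie within `2 ^ i * δ` of a given one. By Cauchy–Schwarz,
  `(N * M) ^ 2 ≲ |Q| * N * log (1 / δ) / δ`, that is, `s ≥ 2 * a + b - 1`.
-/
section HausdorffContent

variable {X : Type*} [EMetricSpace X] {a : ℝ} {s : Set X}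

/-- The Hausdorff content of dimension `a`. Unlike the Hausdorff measure it puts no bound on the
diameters of the covering sets, so a single covering already bounds it from above. -/
def hausdorffContent (a : ℝ) : OuterMeasure X :=
  OuterMeasure.boundedBy fun s => ediam s ^ a

theorem hausdorffContent_le_ediam_rpow (a : ℝ) (s : Set X) :
    hausdorffContent a s ≤ ediam s ^ a :=
  OuterMeasure.boundedBy_le s

theorem hausdorffContent_le_card_mul {ι : Type*} (ha : 0 ≤ a) {S : Finset ι} {t : ι → Set X}
    {d : ℝ≥0∞} (hst : s ⊆ ⋃ i ∈ S, t i) (ht : ∀ i ∈ S, ediam (t i) ≤ d) :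
    hausdorffContent a s ≤ S.card * d ^ a :=
  calc hausdorffContent a s ≤ ∑ i ∈ S, hausdorffContent a (t i) :=
        (measure_mono hst).trans (measure_biUnion_finset_le _ _)
    _ ≤ S.card • d ^ a := Finset.sum_le_card_nsmul _ _ _ fun i hi =>
        (hausdorffContent_le_ediam_rpow a _).trans (rpow_le_rpow (ht i hi) ha)
    _ = S.card * d ^ a := nsmul_eq_mul _ _

theorem exists_cover_of_hausdorffContent_lt (ha : 0 < a) {η : ℝ≥0∞}
    (h : hausdorffContent a s < η) :
    ∃ t : ℕ → Set X, s ⊆ ⋃ n, t n ∧ ∑' n, ediam (t n) ^ a < η := by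
  have h_empty : ediam (∅ : Set X) ^ a = 0 := by rw [ediam_empty, zero_rpow_of_pos ha]
  rw [hausdorffContent, OuterMeasure.boundedBy_eq_ofFunction h_empty,
    OuterMeasure.ofFunction_apply] at h
  simpa only [iInf_lt_iff, exists_prop] using h

theorem hausdorffContent_le_hausdorffMeasure [MeasurableSpace X] [BorelSpace X] (a : ℝ)
    (s : Set X) : hausdorffContent a s ≤ μH[a] s := by
  rw [hausdorffContent, OuterMeasure.boundedBy_apply, Measure.hausdorffMeasure_apply]
  exact le_iSup₂_of_le ∞ zero_lt_top <|
    le_iInf₂ fun t hst => le_iInf fun _ => iInf₂_le t hst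

theorem hausdorffMeasure_eq_zero_of_hausdorffContent_eq_zero [MeasurableSpace X] [BorelSpace X]
    (ha : 0 < a) (h : hausdorffContent a s = 0) : μH[a] s = 0 := by
  rw [Measure.hausdorffMeasure_apply, ← nonpos_iff_eq_zero]
  refine iSup₂_le fun r hr => le_of_forall_gt_imp_ge_of_dense fun ε hε => ?_
  have h_lt : hausdorffContent a s < min ε (r ^ a) :=
    h ▸ lt_min hε (rpow_pos_of_nonneg hr ha.le)
  obtain ⟨t, hst, ht⟩ := exists_cover_of_hausdorffContent_lt ha h_lt
  have h_diam (n : ℕ) : ediam (t n) ≤ r :=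
    (rpow_le_rpow_iff ha).1 <| (ENNReal.le_tsum n).trans <| ht.le.trans <| min_le_right _ _
  calc _ ≤ ∑' n, ⨆ _ : (t n).Nonempty, ediam (t n) ^ a :=
        iInf₂_le_of_le t hst <| iInf_le _ h_diam
    _ ≤ ∑' n, ediam (t n) ^ a := ENNReal.tsum_le_tsum fun n => iSup_const_le
    _ ≤ ε := ht.le.trans (min_le_left _ _)

theorem hausdorffContent_pos_of_lt_dimH (ha : 0 < a) (h : ENNReal.ofReal a < dimH s) :
    0 < hausdorffContent a s := by
  borelize X
  have h_top : μH[a] s = ∞ := by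
    simpa only [Real.coe_toNNReal a ha.le] using hausdorffMeasure_of_lt_dimH h
  refine pos_iff_ne_zero.2 fun h_zero => top_ne_zero (h_top.symm.trans ?_)
  exact hausdorffMeasure_eq_zero_of_hausdorffContent_eq_zero ha h_zero

theorem hausdorffContent_eq_zero_of_dimH_lt (ha : 0 < a) (h : dimH s < ENNReal.ofReal a) :
    hausdorffContent a s = 0 := by
  borelize X
  have h_zero : μH[a] s = 0 := by
    simpa only [Real.coe_toNNReal a ha.le] using hausdorffMeasure_of_dimH_lt h
  exact nonpos_iff_eq_zero.1 ((hausdorffContent_le_hausdorffMeasure a s).trans_eq h_zero)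

end HausdorffContent

section DyadicCover

theorem exists_pow_succ_lt_le_pow {y v : ℝ≥0∞} {k₀ : ℕ} (hy : y < 1) (hv : v ≠ 0)
    (hvk : v ≤ y ^ k₀) : ∃ k ≥ k₀, y ^ (k + 1) < v ∧ v ≤ y ^ k := by
  have h_ex : ∃ k, y ^ (k + 1) < v :=
    ((tendsto_pow_atTop_nhds_zero_of_lt_one hy).comp
      (Filter.tendsto_add_atTop_nat 1)).eventually_lt_const (pos_iff_ne_zero.2 hv) |>.exists
  have h_ge : k₀ ≤ Nat.find h_ex := by
    by_contra! h_lt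
    exact (Nat.find_spec h_ex).not_ge (hvk.trans (pow_le_pow_right_of_le_one' hy.le h_lt))
  refine ⟨Nat.find h_ex, h_ge, Nat.find_spec h_ex, ?_⟩
  rcases h_ge.eq_or_lt with h_eq | h_lt
  · rwa [← h_eq]
  · obtain ⟨m, hm⟩ := Nat.exists_eq_succ_of_ne_zero (Nat.ne_zero_of_lt h_lt)
    rw [hm]
    exact not_lt.1 (Nat.find_min h_ex (hm ▸ m.lt_succ_self))

theorem exists_exponents_of_tsum_lt {y : ℝ≥0∞} {u : ℕ → ℝ≥0∞} {k₀ : ℕ} (hy_pos : y ≠ 0)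
    (hy_lt : y < 1) (hu : ∑' n, u n < y ^ (k₀ + 1)) :
    ∃ K : ℕ → ℕ, (∀ n, k₀ ≤ K n) ∧ (∀ n, u n ≤ y ^ K n) ∧ ∑' n, y ^ K n ≤ 1 := by
  -- Perturbing the weights makes all of them positive, so that each is comparable to a power.
  obtain ⟨ε, hε_pos, hε⟩ := ENNReal.exists_pos_sum_of_countable' (tsub_pos_of_lt hu).ne' ℕ
  have h_sum : ∑' n, (u n + ε n) ≤ y ^ (k₀ + 1) :=
    calc ∑' n, (u n + ε n) = ∑' n, u n + ∑' n, ε n := ENNReal.tsum_add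
      _ ≤ ∑' n, u n + (y ^ (k₀ + 1) - ∑' n, u n) := by gcongr
      _ = y ^ (k₀ + 1) := add_tsub_cancel_of_le hu.le
  have h_pos (n : ℕ) : u n + ε n ≠ 0 := ((hε_pos n).trans_le le_add_self).ne'
  have h_le (n : ℕ) : u n + ε n ≤ y ^ k₀ :=
    (ENNReal.le_tsum n).trans <| h_sum.trans <| pow_le_pow_right_of_le_one' hy_lt.le k₀.le_succ
  choose K hK_ge hK_lt hK_le using fun n => exists_pow_succ_lt_le_pow hy_lt (h_pos n) (h_le n)
  refine ⟨K, hK_ge, fun n => le_self_add.trans (hK_le n), ?_⟩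
  have h_mul : y * ∑' n, y ^ K n ≤ y * 1 := by
    calc y * ∑' n, y ^ K n = ∑' n, y ^ (K n + 1) := by simp only [pow_succ', ENNReal.tsum_mul_left]
      _ ≤ ∑' n, (u n + ε n) := ENNReal.tsum_le_tsum fun n => (hK_lt n).le
      _ ≤ y ^ (k₀ + 1) := h_sum
      _ ≤ y * 1 := by
        rw [pow_succ']
        gcongr
        exact pow_le_one' hy_lt.le k₀
  exact (ENNReal.mul_le_mul_iff_right hy_pos (hy_lt.trans one_lt_top).ne).1 h_mul

theorem exists_dyadic_balls_of_hausdorffContent_eq_zero {X : Type*} [EMetricSpace X] [Nonempty X]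
    {s : ℝ} {E : Set X} (hs : 0 < s) (hE : hausdorffContent s E = 0) (k₀ : ℕ) :
    ∃ (c : ℕ → X) (K : ℕ → ℕ), (∀ n, k₀ ≤ K n) ∧ (∀ x ∈ E, ∃ n, edist x (c n) ≤ 2⁻¹ ^ K n) ∧
      ∑' n, ((2⁻¹ : ℝ≥0∞) ^ K n) ^ s ≤ 1 := by
  have hy_pos : (2⁻¹ : ℝ≥0∞) ^ s ≠ 0 := (rpow_pos (by simp) (by simp)).ne'
  have hy_lt : (2⁻¹ : ℝ≥0∞) ^ s < 1 := rpow_lt_one (by simp) hs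
  have hy_pow (k : ℕ) : ((2⁻¹ : ℝ≥0∞) ^ s) ^ k = (2⁻¹ ^ k) ^ s := by
    rw [← rpow_natCast, ← rpow_mul, mul_comm, rpow_mul, rpow_natCast]
  obtain ⟨t, hEt, ht⟩ := exists_cover_of_hausdorffContent_lt hs
    (hE ▸ pos_iff_ne_zero.2 (pow_ne_zero (k₀ + 1) hy_pos))
  obtain ⟨K, hK_ge, hK_le, hK_sum⟩ := exists_exponents_of_tsum_lt hy_pos hy_lt ht
  simp only [hy_pow] at hK_le hK_sum
  have h_center (n : ℕ) : ∃ c, ∀ x ∈ t n, edist x c ≤ ediam (t n) := by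
    rcases (t n).eq_empty_or_nonempty with h_empty | ⟨c, hc⟩
    · simp [h_empty]
    · exact ⟨c, fun x hx => edist_le_ediam_of_mem hx hc⟩
  choose c hc using h_center
  refine ⟨c, K, hK_ge, fun x hx => ?_, hK_sum⟩
  obtain ⟨n, hn⟩ := mem_iUnion.1 (hEt hx)
  exact ⟨n, (hc n x hn).trans ((rpow_le_rpow_iff hs).1 (hK_le n))⟩

variable {X : Type*} [MetricSpace X]

theorem exists_finset_pairwise_le_dist_of_totallyBounded {s : Set X} {δ : ℝ}
    (hs : TotallyBounded s) (hδ : 0 < δ) :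
    ∃ F : Finset X, (F : Set X) ⊆ s ∧ (F : Set X).Pairwise (δ ≤ dist · ·) ∧
      ∀ x ∈ s, ∃ y ∈ F, dist x y ≤ δ := by
  lift δ to NNReal using hδ.le
  have hδ_half : δ / 2 ≠ 0 := (half_pos (NNReal.coe_pos.1 hδ)).ne'
  obtain ⟨N, -, hN_fin, hN⟩ := exists_finite_isCover_of_totallyBounded hδ_half hs
  have h_packing : packingNumber δ s ≠ ⊤ := by
    have h_le := packingNumber_two_mul_le_externalCoveringNumber (δ / 2) s
    rw [mul_div_cancel₀ δ two_ne_zero] at h_le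
    exact ne_top_of_le_ne_top (encard_ne_top_iff.2 hN_fin)
      (h_le.trans hN.externalCoveringNumber_le_encard)
  have h_finite : (maximalSeparatedSet δ s).Finite := by
    rwa [← encard_ne_top_iff, encard_maximalSeparatedSet h_packing]
  refine ⟨h_finite.toFinset, ?_, ?_, fun x hx => ?_⟩
  · rw [h_finite.coe_toFinset]
    exact maximalSeparatedSet_subset
  · rw [h_finite.coe_toFinset]
    intro x hx y hy hxy
    have h_lt : (δ : ℝ≥0∞) < edist x y := isSeparated_maximalSeparatedSet hx hy hxy
    rw [edist_nndist, ENNReal.coe_lt_coe, ← NNReal.coe_lt_coe, coe_nndist] at h_lt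
    exact h_lt.le
  · obtain ⟨y, hy, hxy⟩ := isCover_maximalSeparatedSet h_packing hx
    exact ⟨y, h_finite.mem_toFinset.2 hy, edist_le_coe.1 hxy⟩

theorem exists_dyadic_nets_of_hausdorffContent_eq_zero [Nonempty X] {s : ℝ} {E : Set X}
    (hs : 0 < s) (hE : hausdorffContent s E = 0) (k₀ : ℕ) :
    ∃ Q : ℕ → Finset X, (∀ k, (Q k).card * ((1 / 2 : ℝ) ^ k) ^ s ≤ 1) ∧
      (∀ k, (Q k : Set X).Pairwise ((1 / 2 : ℝ) ^ k ≤ dist · ·)) ∧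
      ∀ x ∈ E, ∃ k ≥ k₀, ∃ q ∈ Q k, dist x q ≤ 2 * (1 / 2) ^ k := by
  classical
  obtain ⟨c, K, hK, hEc, h_sum⟩ := exists_dyadic_balls_of_hausdorffContent_eq_zero hs hE k₀
  have h_ofReal (k : ℕ) : (2⁻¹ : ℝ≥0∞) ^ k = ENNReal.ofReal ((1 / 2) ^ k) := by
    rw [ENNReal.ofReal_pow (by norm_num), one_div, ENNReal.ofReal_inv_of_pos two_pos,
      ENNReal.ofReal_ofNat]
  have h_weight (k : ℕ) :
      ((2⁻¹ : ℝ≥0∞) ^ k) ^ s = ENNReal.ofReal (((1 / 2 : ℝ) ^ k) ^ s) := by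
    rw [h_ofReal, ENNReal.ofReal_rpow_of_pos (by positivity)]
  simp only [h_weight] at h_sum
  have h_weight_ne (k : ℕ) : ENNReal.ofReal (((1 / 2 : ℝ) ^ k) ^ s) ≠ 0 :=
    (ENNReal.ofReal_pos.2 (by positivity)).ne'
  choose h_fin h_card using fun k =>
    ENNReal.finset_card_const_le_le_of_tsum_le one_ne_top h_sum (h_weight_ne k)
  let C (k : ℕ) : Finset X := (h_fin k).toFinset.image c
  choose Q hQ_sub hQ_sep hQ_cover using fun k =>
    exists_finset_pairwise_le_dist_of_totallyBounded (C k).finite_toSet.totallyBounded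
      (show (0 : ℝ) < (1 / 2) ^ k by positivity)
  refine ⟨Q, fun k => ?_, hQ_sep, fun x hx => ?_⟩
  · have h_le : ((Q k).card : ℝ≥0∞) ≤ 1 / ENNReal.ofReal (((1 / 2 : ℝ) ^ k) ^ s) :=
      (Nat.cast_le.2 ((Finset.card_le_card (hQ_sub k)).trans Finset.card_image_le)).trans (h_card k)
    rw [ENNReal.le_div_iff_mul_le (.inl (h_weight_ne k)) (.inl ofReal_ne_top),
      ← ENNReal.ofReal_natCast, ← ENNReal.ofReal_mul (by positivity)] at h_le
    exact ENNReal.ofReal_le_one.1 h_le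
  · obtain ⟨n, hn⟩ := hEc x hx
    have hcn : c n ∈ C (K n) :=
      Finset.mem_image_of_mem c ((h_fin (K n)).mem_toFinset.2 (le_refl (_ : ℝ≥0∞)))
    obtain ⟨q, hq, hcq⟩ := hQ_cover (K n) (c n) hcn
    have hxc : dist x (c n) ≤ (1 / 2) ^ K n := by
      rwa [h_ofReal, edist_le_ofReal (by positivity)] at hn
    exact ⟨K n, hK n, q, hq, by linarith [dist_triangle x (c n) q]⟩

end DyadicCover
section PointsNear

theorem exists_lt_measure_inter {X ι : Type*} [Countable ι] (μ : OuterMeasure X) {A : Set X}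
    {B : ι → Set X} {w : ι → ℝ≥0∞} (hA : A ⊆ ⋃ i, B i) (hw : ∑' i, w i < μ A) :
    ∃ i, w i < μ (A ∩ B i) := by
  by_contra! h_le
  refine hw.not_ge ?_
  calc μ A ≤ μ (⋃ i, A ∩ B i) := measure_mono (inter_iUnion A B ▸ subset_inter Subset.rfl hA)
    _ ≤ ∑' i, μ (A ∩ B i) := measure_iUnion_le _
    _ ≤ ∑' i, w i := ENNReal.tsum_le_tsum h_le

variable {X : Type*} [MetricSpace X] {a r ρ κ : ℝ} {S : Set X} {Q : Finset X}

theorem ediam_closedBall_le_ofReal (x : X) (r : ℝ) :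
    ediam (closedBall x r) ≤ ENNReal.ofReal (2 * r) :=
  ediam_le_of_forall_dist_le fun _ hy _ hz =>
    (dist_triangle_right _ _ x).trans ((add_le_add hy hz).trans_eq (two_mul r).symm)

theorem le_card_mul_rpow_of_forall_exists_dist_le (ha : 0 ≤ a) (hr : 0 < r)
    (hS : ∀ x ∈ S, ∃ q ∈ Q, dist x q ≤ r) (hκ : ENNReal.ofReal κ ≤ hausdorffContent a S) :
    κ ≤ Q.card * (2 * r) ^ a := by
  have h_cover : S ⊆ ⋃ q ∈ Q, closedBall q r := fun x hx => by
    simpa only [mem_iUnion, mem_closedBall, exists_prop] using hS x hx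
  have h_le := hκ.trans <|
    hausdorffContent_le_card_mul ha h_cover fun q _ => ediam_closedBall_le_ofReal q r
  rw [ENNReal.ofReal_rpow_of_pos (by positivity), ← ENNReal.ofReal_natCast,
    ← ENNReal.ofReal_mul (by positivity)] at h_le
  exact (ENNReal.ofReal_le_ofReal_iff (by positivity)).1 h_le

theorem ofReal_half_le_hausdorffContent_diff_ball (ha : 0 ≤ a) (hρ : 0 < ρ)
    (hκ : ENNReal.ofReal κ ≤ hausdorffContent a S) (hρκ : (2 * ρ) ^ a ≤ κ / 2) (x : X) :
    ENNReal.ofReal (κ / 2) ≤ hausdorffContent a (S \ ball x ρ) := by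
  have h_ball : hausdorffContent a (ball x ρ) ≤ ENNReal.ofReal (κ / 2) :=
    calc hausdorffContent a (ball x ρ) ≤ ediam (ball x ρ) ^ a := hausdorffContent_le_ediam_rpow _ _
      _ ≤ ENNReal.ofReal (2 * ρ) ^ a := by
        gcongr
        exact (ediam_mono ball_subset_closedBall).trans (ediam_closedBall_le_ofReal x ρ)
      _ = ENNReal.ofReal ((2 * ρ) ^ a) := ENNReal.ofReal_rpow_of_pos (by positivity)
      _ ≤ ENNReal.ofReal (κ / 2) := ENNReal.ofReal_le_ofReal hρκ
  have h_half : 0 ≤ κ / 2 := (Real.rpow_nonneg (by positivity) a).trans hρκ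
  refine (ENNReal.add_le_add_iff_right (a := ENNReal.ofReal (κ / 2)) ofReal_ne_top).1 ?_
  calc ENNReal.ofReal (κ / 2) + ENNReal.ofReal (κ / 2) = ENNReal.ofReal κ := by
        rw [← ENNReal.ofReal_add h_half h_half, add_halves]
    _ ≤ hausdorffContent a (S \ ball x ρ ∪ ball x ρ) := hκ.trans (measure_mono (by simp))
    _ ≤ hausdorffContent a (S \ ball x ρ) + ENNReal.ofReal (κ / 2) :=
      (measure_union_le _ _).trans (by gcongr)

open Classical in
/-- The points of `Q` at distance at most `r` from `S`: they stand for the part of `S` seen at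
scale `r`. -/
def pointsNear (Q : Finset X) (r : ℝ) (S : Set X) : Finset X :=
  {q ∈ Q | ∃ x ∈ S, dist x q ≤ r}

theorem mem_pointsNear {q : X} : q ∈ pointsNear Q r S ↔ q ∈ Q ∧ ∃ x ∈ S, dist x q ≤ r := by
  simp only [pointsNear, Finset.mem_filter]

theorem pointsNear_subset (Q : Finset X) (r : ℝ) (S : Set X) : pointsNear Q r S ⊆ Q :=
  fun _ hq => (mem_pointsNear.1 hq).1

theorem le_card_pointsNear_mul_rpow (ha : 0 ≤ a) (hr : 0 < r)
    (hS : ∀ x ∈ S, ∃ q ∈ Q, dist x q ≤ r) (hκ : ENNReal.ofReal κ ≤ hausdorffContent a S) :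
    κ ≤ (pointsNear Q r S).card * (2 * r) ^ a :=
  le_card_mul_rpow_of_forall_exists_dist_le ha hr (fun x hx =>
    let ⟨q, hq, hxq⟩ := hS x hx
    ⟨q, mem_pointsNear.2 ⟨hq, x, hx, hxq⟩, hxq⟩) hκ

open Classical in
/-- The pairs of points of `Q` that lie within `r` of two points of `S` at mutual distance at
least `ρ`. -/
def farPairs (Q : Finset X) (r ρ : ℝ) (S : Set X) : Finset (X × X) :=
  {p ∈ Q ×ˢ Q | ∃ x ∈ S, ∃ y ∈ S, ρ ≤ dist x y ∧ dist x p.1 ≤ r ∧ dist y p.2 ≤ r}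

theorem mem_farPairs {p : X × X} : p ∈ farPairs Q r ρ S ↔ (p.1 ∈ Q ∧ p.2 ∈ Q) ∧
    ∃ x ∈ S, ∃ y ∈ S, ρ ≤ dist x y ∧ dist x p.1 ≤ r ∧ dist y p.2 ≤ r := by
  simp only [farPairs, Finset.mem_filter, Finset.mem_product]

theorem farPairs_subset (Q : Finset X) (r ρ : ℝ) (S : Set X) : farPairs Q r ρ S ⊆ Q ×ˢ Q :=
  fun _ hp => Finset.mem_product.2 (mem_farPairs.1 hp).1

open Classical in
theorem half_le_card_farPairs_fiber_mul_rpow (ha : 0 ≤ a) (hr : 0 < r) (hρ : 0 < ρ)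
    (hS : ∀ x ∈ S, ∃ q ∈ Q, dist x q ≤ r) (hκ : ENNReal.ofReal κ ≤ hausdorffContent a S)
    (hρκ : (2 * ρ) ^ a ≤ κ / 2) {q : X} (hq : q ∈ pointsNear Q r S) :
    κ / 2 ≤ {p ∈ farPairs Q r ρ S | p.1 = q}.card * (2 * r) ^ a := by
  obtain ⟨hqQ, x, hx, hxq⟩ := mem_pointsNear.1 hq
  refine (le_card_pointsNear_mul_rpow ha hr (fun y hy => hS y (sdiff_subset hy))
    (ofReal_half_le_hausdorffContent_diff_ball ha hρ hκ hρκ x)).trans ?_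
  gcongr
  refine Finset.card_le_card_of_injOn (Prod.mk q) (fun q' hq' => ?_)
    (Prod.mk_right_injective q).injOn
  obtain ⟨hq'Q, y, ⟨hy, hxy⟩, hyq'⟩ := mem_pointsNear.1 hq'
  rw [mem_ball, not_lt, dist_comm] at hxy
  exact Finset.mem_filter.2 ⟨mem_farPairs.2 ⟨⟨hqQ, hq'Q⟩, x, hx, y, hy, hxy, hxq, hyq'⟩, rfl⟩

theorem mul_half_le_card_farPairs_mul (ha : 0 ≤ a) (hr : 0 < r) (hρ : 0 < ρ)
    (hS : ∀ x ∈ S, ∃ q ∈ Q, dist x q ≤ r) (hκ : ENNReal.ofReal κ ≤ hausdorffContent a S)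
    (hρκ : (2 * ρ) ^ a ≤ κ / 2) :
    κ * (κ / 2) ≤ (farPairs Q r ρ S).card * ((2 * r) ^ a) ^ 2 := by
  classical
  have h_half : 0 ≤ κ / 2 := (Real.rpow_nonneg (by positivity) a).trans hρκ
  have h_fst (p : X × X) (hp : p ∈ farPairs Q r ρ S) : p.1 ∈ pointsNear Q r S := by
    obtain ⟨⟨hq, -⟩, x, hx, -, -, -, hxq, -⟩ := mem_farPairs.1 hp
    exact mem_pointsNear.2 ⟨hq, x, hx, hxq⟩
  have h_fibers : (pointsNear Q r S).card * (κ / 2) ≤ (farPairs Q r ρ S).card * (2 * r) ^ a := by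
    rw [Finset.card_eq_sum_card_fiberwise h_fst, Nat.cast_sum, Finset.sum_mul, ← nsmul_eq_mul]
    exact Finset.card_nsmul_le_sum _ _ _ fun q hq =>
      half_le_card_farPairs_fiber_mul_rpow ha hr hρ hS hκ hρκ hq
  calc κ * (κ / 2) ≤ (pointsNear Q r S).card * (2 * r) ^ a * (κ / 2) := by
        gcongr
        exact le_card_pointsNear_mul_rpow ha hr hS hκ
    _ = (pointsNear Q r S).card * (κ / 2) * (2 * r) ^ a := by ring
    _ ≤ (farPairs Q r ρ S).card * (2 * r) ^ a * (2 * r) ^ a := by gcongr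
    _ = (farPairs Q r ρ S).card * ((2 * r) ^ a) ^ 2 := by ring

end PointsNear
section Packing

open Module (finrank)

variable {V : Type*} [NormedAddCommGroup V] [NormedSpace ℝ V]

theorem abs_mul_norm_sub_le {e e' : V} (he' : ‖e'‖ = 1) (t t' : ℝ) :
    |t| * ‖e - e'‖ ≤ ‖t • e - t' • e'‖ + |t - t'| :=
  calc |t| * ‖e - e'‖ = ‖(t • e - t' • e') - (t - t') • e'‖ := by
        rw [← Real.norm_eq_abs, ← norm_smul]
        congr 1
        module
    _ ≤ ‖t • e - t' • e'‖ + |t - t'| := by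
        simpa only [norm_smul, he', mul_one, Real.norm_eq_abs] using
          norm_sub_le (t • e - t' • e') ((t - t') • e')

theorem abs_abs_sub_abs_le_norm_smul_sub_smul {e e' : V} (he : ‖e‖ = 1) (he' : ‖e'‖ = 1)
    (t t' : ℝ) : |(|t| - |t'|)| ≤ ‖t • e - t' • e'‖ := by
  simpa only [norm_smul, he, he', mul_one, Real.norm_eq_abs] using
    abs_norm_sub_norm_le (t • e) (t' • e')

theorem half_le_dist_smul_smul {δ : ℝ} {p p' : V × ℕ} (hδ : 0 < δ) (hp : ‖p.1‖ = 1)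
    (hp' : ‖p'.1‖ = 1) (h_sep : p.1 ≠ p'.1 → δ ≤ dist p.1 p'.1) (h_ne : p ≠ p') :
    δ / 2 ≤ dist ((1 + p.2 * δ) • p.1) ((1 + p'.2 * δ) • p'.1) := by
  obtain ⟨e, i⟩ := p
  obtain ⟨e', j⟩ := p'
  rw [dist_eq_norm]
  rcases eq_or_ne e e' with rfl | h_ne'
  · have h_int : (1 : ℝ) ≤ |(i : ℝ) - j| := by
      have h_ij : (i : ℤ) - j ≠ 0 := by grind
      exact_mod_cast Int.one_le_abs h_ij
    rw [show (1 + i * δ) • e - (1 + j * δ) • e = (((i : ℝ) - j) * δ) • e by module, norm_smul, hp,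
      mul_one, Real.norm_eq_abs, abs_mul, abs_of_pos hδ]
    nlinarith
  · have h_dist : δ ≤ ‖e - e'‖ := dist_eq_norm e e' ▸ h_sep h_ne'
    have h_i : 0 ≤ i * δ := by positivity
    have h_j : 0 ≤ j * δ := by positivity
    have h_abs := abs_abs_sub_abs_le_norm_smul_sub_smul hp hp' (1 + i * δ) (1 + j * δ)
    have h_le := abs_mul_norm_sub_le (e := e) hp' (1 + i * δ) (1 + j * δ)
    rw [abs_of_nonneg (by linarith : 0 ≤ 1 + i * δ)] at h_abs h_le
    rw [abs_of_nonneg (by linarith : 0 ≤ 1 + j * δ)] at h_abs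
    nlinarith [norm_nonneg (e - e')]

theorem card_Icc_floor_div_le {δ ℓ : ℝ} (hδ : 0 < δ) (hδℓ : δ ≤ ℓ) :
    ((Finset.Icc ⌊-ℓ / δ⌋ ⌊ℓ / δ⌋).card : ℝ) ≤ 4 * ℓ / δ := by
  have h_le : ⌊-ℓ / δ⌋ ≤ ⌊ℓ / δ⌋ + 1 :=
    (Int.floor_mono (by gcongr; linarith)).trans (le_add_of_nonneg_right zero_le_one)
  have h_card : ((Finset.Icc ⌊-ℓ / δ⌋ ⌊ℓ / δ⌋).card : ℝ) = ⌊ℓ / δ⌋ + 1 - ⌊-ℓ / δ⌋ := by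
    exact_mod_cast Int.card_Icc_of_le _ _ h_le
  have h_one : 1 ≤ ℓ / δ := (one_le_div hδ).2 hδℓ
  rw [h_card, mul_div_assoc]
  linarith [Int.floor_le (ℓ / δ), Int.lt_floor_add_one (-ℓ / δ), neg_div δ ℓ]

variable [FiniteDimensional ℝ V] {F : Finset V} {x : V} {δ : ℝ}

theorem card_le_of_pairwise_le_dist {R : ℝ} (hδ : 0 < δ) (hR : 0 ≤ R)
    (h_sep : (F : Set V).Pairwise (δ ≤ dist · ·)) (h_ball : ∀ c ∈ F, dist c x ≤ R) :
    (F.card : ℝ) ≤ (2 * R / δ + 1) ^ finrank ℝ V := by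
  borelize V
  let μ : Measure V := Measure.addHaar
  have h_disj : (F : Set V).PairwiseDisjoint fun c => ball c (δ / 2) := fun c hc c' hc' h_ne =>
    ball_disjoint_ball (by linarith [h_sep hc hc' h_ne])
  have h_union : ⋃ c ∈ F, ball c (δ / 2) ⊆ ball x (R + δ / 2) := iUnion₂_subset fun c hc =>
    ball_subset_ball' (by linarith [h_ball c hc])
  have h_volume : F.card * ENNReal.ofReal ((δ / 2) ^ finrank ℝ V) * μ (ball 0 1) ≤
      ENNReal.ofReal ((R + δ / 2) ^ finrank ℝ V) * μ (ball 0 1) :=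
    calc F.card * ENNReal.ofReal ((δ / 2) ^ finrank ℝ V) * μ (ball 0 1)
        = ∑ c ∈ F, μ (ball c (δ / 2)) := by
          simp only [μ.addHaar_ball_of_pos _ (half_pos hδ), Finset.sum_const, nsmul_eq_mul,
            mul_assoc]
      _ = μ (⋃ c ∈ F, ball c (δ / 2)) :=
        (measure_biUnion_finset h_disj fun c _ => measurableSet_ball).symm
      _ ≤ μ (ball x (R + δ / 2)) := measure_mono h_union
      _ = _ := μ.addHaar_ball_of_pos _ (by positivity)
  have h_le := (ENNReal.mul_le_mul_iff_left (measure_ball_pos μ _ zero_lt_one).ne'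
    measure_ball_lt_top.ne).1 h_volume
  rw [← ENNReal.ofReal_natCast, ← ENNReal.ofReal_mul (by positivity),
    ENNReal.ofReal_le_ofReal_iff (by positivity), ← le_div_iff₀ (by positivity), ← div_pow] at h_le
  rwa [show 2 * R / δ + 1 = (R + δ / 2) / (δ / 2) by field_simp]

theorem card_mul_le_of_norm_eq_one {m : ℕ} (hδ : 0 < δ) (hm : 1 ≤ m)
    (h_sep : (F : Set V).Pairwise (δ ≤ dist · ·)) (h_norm : ∀ e ∈ F, ‖e‖ = 1)
    (h_ball : ∀ e ∈ F, dist e x ≤ m * δ) :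
    (F.card : ℝ) * m ≤ (9 * m) ^ finrank ℝ V := by
  classical
  -- Spreading each unit vector over `m` points of its ray makes up, in the volume count, for the
  -- dimension that the sphere lacks.
  let f (p : V × ℕ) : V := (1 + p.2 * δ) • p.1
  have h_far : ((F ×ˢ Finset.range m : Finset (V × ℕ)) : Set (V × ℕ)).Pairwise
      (Function.onFun (δ / 2 ≤ dist · ·) f) := fun p hp p' hp' => by
    rw [Finset.mem_coe, Finset.mem_product] at hp hp'
    exact half_le_dist_smul_smul hδ (h_norm _ hp.1) (h_norm _ hp'.1) (h_sep hp.1 hp'.1)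
  have h_inj : InjOn f (F ×ˢ Finset.range m : Finset (V × ℕ)) := fun p hp p' hp' h_eq => by
    by_contra h_ne
    have h_pos : δ / 2 ≤ dist (f p) (f p') := h_far hp hp' h_ne
    rw [h_eq, dist_self] at h_pos
    linarith
  have h_near : ∀ p ∈ F ×ˢ Finset.range m, dist (f p) x ≤ 2 * (m * δ) := by
    rintro ⟨e, i⟩ hp
    obtain ⟨he, hi⟩ := Finset.mem_product.1 hp
    have h_stretch : dist (f (e, i)) e = i * δ := by
      rw [dist_eq_norm, show f (e, i) - e = (i * δ) • e by simp only [f]; module,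
        norm_smul_of_nonneg (by positivity), h_norm e he, mul_one]
    have h_im : (i : ℝ) * δ ≤ m * δ := by
      gcongr
      exact (Finset.mem_range.1 hi).le
    linarith [dist_triangle (f (e, i)) e x, h_ball e he]
  have h_card := card_le_of_pairwise_le_dist (half_pos hδ) (show 0 ≤ 2 * (m * δ) by positivity)
    (Finset.coe_image (f := f) ▸ h_far.image) (Finset.forall_mem_image.2 h_near)
  rw [Finset.card_image_of_injOn h_inj, Finset.card_product, Finset.card_range, Nat.cast_mul,
    show 2 * (2 * (m * δ)) / (δ / 2) = 8 * m by field_simp; norm_num] at h_card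
  refine h_card.trans ?_
  gcongr
  linarith [(Nat.one_le_cast (α := ℝ)).2 hm]

theorem card_le_of_forall_exists_dist_add_smul_le {e : V} {ℓ : ℝ} (hδ : 0 < δ) (hδℓ : δ ≤ ℓ)
    (he : ‖e‖ = 1) (h_sep : (F : Set V).Pairwise (δ ≤ dist · ·))
    (h_tube : ∀ q ∈ F, ∃ t : ℝ, |t| ≤ ℓ ∧ dist (x + t • e) q ≤ 2 * δ) :
    (F.card : ℝ) ≤ 7 ^ finrank ℝ V * (4 * ℓ / δ) := by
  choose! t ht_abs ht_dist using h_tube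
  set cells : Finset ℤ := Finset.Icc ⌊-ℓ / δ⌋ ⌊ℓ / δ⌋
  have h_maps : ∀ q ∈ F, ⌊t q / δ⌋ ∈ cells := fun q hq => by
    obtain ⟨h_lower, h_upper⟩ := abs_le.1 (ht_abs q hq)
    exact Finset.mem_Icc.2 ⟨Int.floor_mono (by gcongr), Int.floor_mono (by gcongr)⟩
  have h_cell (i : ℤ) : {q ∈ F | ⌊t q / δ⌋ = i}.card ≤ 7 ^ finrank ℝ V := by
    have h_le := card_le_of_pairwise_le_dist (F := {q ∈ F | ⌊t q / δ⌋ = i}) (x := x + (i * δ) • e)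
      (R := 3 * δ) hδ (by positivity)
      (h_sep.mono (Finset.coe_subset.2 (Finset.filter_subset _ _))) fun q hq => ?_
    · rw [show 2 * (3 * δ) / δ + 1 = 7 by field_simp; norm_num] at h_le
      exact_mod_cast h_le
    · obtain ⟨hqF, hqi⟩ := Finset.mem_filter.1 hq
      have h_lower : i ≤ t q / δ := hqi ▸ Int.floor_le _
      have h_upper : t q / δ < i + 1 := hqi ▸ Int.lt_floor_add_one _
      rw [le_div_iff₀ hδ] at h_lower
      rw [div_lt_iff₀ hδ] at h_upper
      have h_axis : dist (x + t q • e) (x + (i * δ) • e) ≤ δ := by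
        rw [dist_add_left, dist_eq_norm, ← sub_smul, norm_smul, he, mul_one, Real.norm_eq_abs,
          abs_le]
        constructor <;> linarith
      linarith [dist_triangle_left q (x + (i * δ) • e) (x + t q • e), ht_dist q hqF]
  calc (F.card : ℝ) ≤ (7 ^ finrank ℝ V * cells.card : ℕ) :=
        Nat.cast_le.2 (Finset.card_le_mul_card_image_of_maps_to h_maps _ fun i _ => h_cell i)
    _ ≤ 7 ^ finrank ℝ V * (4 * ℓ / δ) := by
      push_cast
      gcongr
      exact card_Icc_floor_div_le hδ hδℓ

end Packing
section DoubleCounting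

theorem sq_sum_card_le_card_mul_sum_card_inter {ι α : Type*} [DecidableEq α] {F : Finset ι}
    {Q : Finset α} {P : ι → Finset α} (hP : ∀ i ∈ F, P i ⊆ Q) :
    (∑ i ∈ F, (P i).card) ^ 2 ≤ Q.card * ∑ i ∈ F, ∑ j ∈ F, (P i ∩ P j).card := by
  let χ (i : ι) (q : α) : ℕ := if q ∈ P i then 1 else 0
  have h_card {S : Finset α} (hS : S ⊆ Q) : S.card = ∑ q ∈ Q, if q ∈ S then 1 else 0 := by
    rw [← Finset.card_filter, Finset.filter_mem_eq_inter, Finset.inter_eq_right.2 hS]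
  have h_sum : ∑ i ∈ F, (P i).card = ∑ q ∈ Q, ∑ i ∈ F, χ i q := by
    rw [Finset.sum_comm]
    exact Finset.sum_congr rfl fun i hi => h_card (hP i hi)
  have h_inter : ∑ i ∈ F, ∑ j ∈ F, (P i ∩ P j).card = ∑ q ∈ Q, (∑ i ∈ F, χ i q) ^ 2 := by
    simp only [sq, Finset.sum_mul_sum]
    refine (Finset.sum_comm.trans <| Finset.sum_congr rfl fun i hi =>
      Finset.sum_comm.trans <| Finset.sum_congr rfl fun j _ => ?_).symm
    rw [h_card (Finset.inter_subset_left.trans (hP i hi))]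
    simp only [χ, Finset.mem_inter, ite_zero_mul_ite_zero, mul_one]
  rw [h_sum, h_inter]
  exact sq_sum_le_card_mul_sum_sq

theorem inv_max_le_sum_ite {d δ : ℝ} {n : ℕ} (hδ : 0 < δ) (hd : d ≤ 2 ^ n * δ) :
    (max δ d)⁻¹ ≤ ∑ i ∈ Finset.range (n + 1), if d ≤ 2 ^ i * δ then 2 / (2 ^ i * δ) else 0 := by
  have h_ex : ∃ i, d ≤ 2 ^ i * δ := ⟨n, hd⟩
  set i := Nat.find h_ex
  have h_term : (max δ d)⁻¹ ≤ 2 / (2 ^ i * δ) := by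
    rw [inv_le_comm₀ (lt_max_of_lt_left hδ) (by positivity), inv_div]
    rcases Nat.eq_zero_or_pos i with h_zero | h_pos
    · rw [h_zero, pow_zero, one_mul]
      exact (half_le_self hδ.le).trans (le_max_left _ _)
    · have h_prev : 2 ^ (i - 1) * δ < d :=
        not_le.1 (Nat.find_min h_ex (Nat.sub_lt h_pos one_pos))
      rw [← Nat.sub_add_cancel h_pos, pow_succ, mul_right_comm, mul_div_cancel_right₀ _ two_ne_zero]
      exact h_prev.le.trans (le_max_right _ _)
  have hi_mem : i ∈ Finset.range (n + 1) :=
    Finset.mem_range.2 (Nat.lt_succ_of_le (Nat.find_min' h_ex hd))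
  refine h_term.trans <| le_of_eq_of_le (if_pos (Nat.find_spec h_ex)).symm <|
    Finset.single_le_sum (f := fun i : ℕ => if d ≤ 2 ^ i * δ then 2 / (2 ^ i * δ) else 0)
      (fun _ _ => ?_) hi_mem
  split_ifs <;> positivity

theorem sum_inv_max_dist_le {X : Type*} [PseudoMetricSpace X] {F : Finset X} {x : X} {C δ : ℝ}
    {n : ℕ} (hδ : 0 < δ) (h_dist : ∀ y ∈ F, dist x y ≤ 2 ^ n * δ)
    (h_card : ∀ i : ℕ, ({y ∈ F | dist x y ≤ 2 ^ i * δ}.card : ℝ) ≤ C * 2 ^ i) :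
    ∑ y ∈ F, (max δ (dist x y))⁻¹ ≤ (n + 1) * (2 * C / δ) :=
  calc ∑ y ∈ F, (max δ (dist x y))⁻¹
      ≤ ∑ y ∈ F, ∑ i ∈ Finset.range (n + 1),
          if dist x y ≤ 2 ^ i * δ then 2 / (2 ^ i * δ) else 0 :=
        Finset.sum_le_sum fun y hy => inv_max_le_sum_ite hδ (h_dist y hy)
    _ = ∑ i ∈ Finset.range (n + 1),
          {y ∈ F | dist x y ≤ 2 ^ i * δ}.card * (2 / (2 ^ i * δ)) := by
        rw [Finset.sum_comm]
        simp only [← Finset.sum_filter, Finset.sum_const, nsmul_eq_mul]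
    _ ≤ ∑ i ∈ Finset.range (n + 1), C * 2 ^ i * (2 / (2 ^ i * δ)) := by
        gcongr with i
        exact h_card i
    _ = (n + 1) * (2 * C / δ) := by
        have h_const (i : ℕ) : C * 2 ^ i * (2 / (2 ^ i * δ)) = 2 * C / δ := by field_simp
        simp only [h_const, Finset.sum_const, Finset.card_range, nsmul_eq_mul, Nat.cast_add_one]

end DoubleCounting
section DiscretizedFurstenbergSet

open Module (finrank)

variable {V : Type*} [NormedAddCommGroup V] [NormedSpace ℝ V]

/-- `A e` is a subset, of diameter at most `T`, of a line in the direction of `e`, for every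
direction `e` in the set `L` of unit vectors. Requiring `1 ≤ ‖e + e'‖` confines `L` to one side of
the sphere, so that distinct vectors of `L` span distinct lines. -/
structure IsSegmentFamily (T : ℝ) (L : Set V) (A : V → Set V) : Prop where
  norm_eq_one : ∀ e ∈ L, ‖e‖ = 1
  one_le_norm_add : ∀ e ∈ L, ∀ e' ∈ L, 1 ≤ ‖e + e'‖
  exists_add_smul_eq : ∀ e ∈ L, ∀ x ∈ A e, ∀ y ∈ A e, ∃ t : ℝ, x + t • e = y
  dist_le : ∀ e ∈ L, ∀ x ∈ A e, ∀ y ∈ A e, dist x y ≤ T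

/-- The part of an `F_{ab}`-set seen at scale `δ`: the `δ`-separated set `Q` is a `2δ`-net of
`⋃ e ∈ L, A e`, and the Hausdorff contents of the set of directions `L` and of the slices `A e`, of
dimensions `b` and `a`, are at least `κ`. -/
structure IsDiscretizedFurstenbergSet (a b κ T δ : ℝ) (Q : Finset V) (L : Set V) (A : V → Set V) :
    Prop extends IsSegmentFamily T L A where
  pairwise_le_dist : (Q : Set V).Pairwise (δ ≤ dist · ·)
  exists_dist_le : ∀ e ∈ L, ∀ x ∈ A e, ∃ q ∈ Q, dist x q ≤ 2 * δ
  le_content_directions : ENNReal.ofReal κ ≤ hausdorffContent b L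
  le_content : ∀ e ∈ L, ENNReal.ofReal κ ≤ hausdorffContent a (A e)

theorem abs_mul_norm_sub_le_four_mul {e e' : V} (he : ‖e‖ = 1) (he' : ‖e'‖ = 1)
    (h_add : 1 ≤ ‖e + e'‖) (t t' : ℝ) : |t| * ‖e - e'‖ ≤ 4 * ‖t • e - t' • e'‖ := by
  have h_abs := abs_abs_sub_abs_le_norm_smul_sub_smul he he' t t'
  have h_cases : |t - t'| ≤ ‖t • e - t' • e'‖ ∨ |t + t'| ≤ ‖t • e - t' • e'‖ := by
    grind
  rcases h_cases with h_sub | h_sum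
  · linarith [abs_mul_norm_sub_le (e := e) he' t t', norm_nonneg (t • e - t' • e')]
  · have h_neg := abs_mul_norm_sub_le (e := e) ((norm_neg e').trans he') t (-t')
    rw [neg_smul_neg, sub_neg_eq_add, sub_neg_eq_add] at h_neg
    have h_two : ‖e - e'‖ ≤ 2 := by linarith [norm_sub_le e e']
    nlinarith [abs_nonneg t]

theorem two_mul_rpow_mul_four_mul_rpow_sq {δ : ℝ} (a b : ℝ) (hδ : 0 < δ) :
    (2 * δ) ^ b * ((2 * (2 * δ)) ^ a) ^ 2 = 2 ^ b * (4 ^ a) ^ 2 * δ ^ (2 * a + b) := by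
  rw [← mul_assoc, show (2 : ℝ) * 2 = 4 by norm_num, Real.mul_rpow (by norm_num) hδ.le,
    Real.mul_rpow (by norm_num) hδ.le, Real.rpow_add hδ, mul_comm 2 a, Real.rpow_mul hδ.le,
    Real.rpow_two]
  ring

namespace IsSegmentFamily

variable {T : ℝ} {L : Set V} {A : V → Set V}

theorem dist_mul_dist_le (h : IsSegmentFamily T L A) {e e' : V} (he : e ∈ L) (he' : e' ∈ L)
    {x y x' y' q q' : V} {r : ℝ} (hx : x ∈ A e) (hy : y ∈ A e) (hx' : x' ∈ A e') (hy' : y' ∈ A e')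
    (hxq : dist x q ≤ r) (hyq' : dist y q' ≤ r) (hxq' : dist x' q ≤ r) (hyq'' : dist y' q' ≤ r) :
    dist x y * dist e e' ≤ 16 * r := by
  obtain ⟨t, rfl⟩ := h.exists_add_smul_eq e he x hx y hy
  obtain ⟨t', rfl⟩ := h.exists_add_smul_eq e' he' x' hx' y' hy'
  have h_norm : ‖t • e - t' • e'‖ ≤ 4 * r :=
    calc ‖t • e - t' • e'‖ = dist (x + t • e - x) (x' + t' • e' - x') := by
          rw [add_sub_cancel_left, add_sub_cancel_left, dist_eq_norm]
      _ ≤ dist (x + t • e) (x' + t' • e') + dist x x' := dist_sub_sub_le _ _ _ _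
      _ ≤ 4 * r := by
        linarith [dist_triangle_right (x + t • e) (x' + t' • e') q', dist_triangle_right x x' q]
  calc dist x (x + t • e) * dist e e' = |t| * ‖e - e'‖ := by
        rw [dist_self_add_right, norm_smul, h.norm_eq_one e he, mul_one, Real.norm_eq_abs,
          dist_eq_norm]
    _ ≤ 4 * ‖t • e - t' • e'‖ := abs_mul_norm_sub_le_four_mul (h.norm_eq_one e he)
        (h.norm_eq_one e' he') (h.one_le_norm_add e he e' he') t t'
    _ ≤ 16 * r := by linarith

theorem dist_le_two (h : IsSegmentFamily T L A) {e e' : V} (he : e ∈ L) (he' : e' ∈ L) :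
    dist e e' ≤ 2 := by
  linarith [dist_le_norm_add_norm e e', h.norm_eq_one e he, h.norm_eq_one e' he']

theorem totallyBounded [FiniteDimensional ℝ V] (h : IsSegmentFamily T L A) : TotallyBounded L :=
  have : ProperSpace V := FiniteDimensional.proper ℝ V
  (isCompact_closedBall (0 : V) 1).totallyBounded.subset fun e he =>
    mem_closedBall_zero_iff.2 (h.norm_eq_one e he).le

theorem exists_abs_mul_max_dist_le (h : IsSegmentFamily T L A) (hT : 1 ≤ T) {e e' : V} (he : e ∈ L)
    (he' : e' ∈ L) {x x' q₀ q : V} {δ : ℝ} {Q : Finset V} (hδ : 0 ≤ δ) (hx : x ∈ A e)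
    (hx' : x' ∈ A e') (hxq₀ : dist x q₀ ≤ 2 * δ) (hxq₀' : dist x' q₀ ≤ 2 * δ)
    (hq : q ∈ pointsNear Q (2 * δ) (A e)) (hq' : q ∈ pointsNear Q (2 * δ) (A e')) :
    ∃ t : ℝ, |t| * max δ (dist e e') ≤ 32 * T * δ ∧ dist (x + t • e) q ≤ 2 * δ := by
  obtain ⟨-, y, hy, hyq⟩ := mem_pointsNear.1 hq
  obtain ⟨-, y', hy', hyq'⟩ := mem_pointsNear.1 hq'
  have h_angle := h.dist_mul_dist_le he he' hx hy hx' hy' hxq₀ hyq hxq₀' hyq'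
  have h_diam := h.dist_le e he x hx y hy
  obtain ⟨t, rfl⟩ := h.exists_add_smul_eq e he x hx y hy
  rw [dist_self_add_right, norm_smul, h.norm_eq_one e he, mul_one,
    Real.norm_eq_abs] at h_angle h_diam
  refine ⟨t, ?_, hyq⟩
  rw [mul_max_of_nonneg _ _ (abs_nonneg t)]
  refine max_le ?_ ?_ <;> nlinarith

theorem card_pointsNear_inter_le [FiniteDimensional ℝ V] [DecidableEq V]
    (h : IsSegmentFamily T L A) (hT : 1 ≤ T) {δ : ℝ} (hδ_pos : 0 < δ) (hδ_le : δ ≤ 1)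
    {Q : Finset V} (hQ : (Q : Set V).Pairwise (δ ≤ dist · ·)) {e e' : V} (he : e ∈ L)
    (he' : e' ∈ L) :
    ((pointsNear Q (2 * δ) (A e) ∩ pointsNear Q (2 * δ) (A e')).card : ℝ) ≤
      7 ^ finrank ℝ V * (128 * T) * (max δ (dist e e'))⁻¹ := by
  set P := pointsNear Q (2 * δ) (A e) ∩ pointsNear Q (2 * δ) (A e')
  set θ := max δ (dist e e')
  have hθ_pos : 0 < θ := lt_max_of_lt_left hδ_pos
  have hθ_le : θ ≤ 2 := max_le (by linarith) (h.dist_le_two he he')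
  rcases P.eq_empty_or_nonempty with h_empty | ⟨q₀, hq₀⟩
  · rw [h_empty, Finset.card_empty, Nat.cast_zero]
    positivity
  obtain ⟨-, x, hx, hxq₀⟩ := mem_pointsNear.1 (Finset.mem_inter.1 hq₀).1
  obtain ⟨-, x', hx', hxq₀'⟩ := mem_pointsNear.1 (Finset.mem_inter.1 hq₀).2
  have h_tube : ∀ q ∈ P, ∃ t : ℝ, |t| ≤ 32 * T * δ / θ ∧ dist (x + t • e) q ≤ 2 * δ :=
    fun q hq => by
      obtain ⟨hqe, hqe'⟩ := Finset.mem_inter.1 hq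
      simpa only [le_div_iff₀ hθ_pos] using
        h.exists_abs_mul_max_dist_le hT he he' hδ_pos.le hx hx' hxq₀ hxq₀' hqe hqe'
  have hδ_tube : δ ≤ 32 * T * δ / θ := by
    rw [le_div_iff₀ hθ_pos]
    nlinarith
  have h_sep : (P : Set V).Pairwise (δ ≤ dist · ·) :=
    hQ.mono fun q hq => pointsNear_subset _ _ _ (Finset.mem_inter.1 hq).1
  have h_card := card_le_of_forall_exists_dist_add_smul_le hδ_pos hδ_tube (h.norm_eq_one e he)
    h_sep h_tube
  refine h_card.trans_eq ?_
  field_simp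
  norm_num

end IsSegmentFamily

namespace IsDiscretizedFurstenbergSet

variable [FiniteDimensional ℝ V] {a b κ T δ : ℝ} {Q : Finset V} {L : Set V} {A : V → Set V}

theorem exists_separated_directions (h : IsDiscretizedFurstenbergSet a b κ T δ Q L A) (hb : 0 ≤ b)
    (hδ : 0 < δ) : ∃ F : Finset V, (F : Set V) ⊆ L ∧ (F : Set V).Pairwise (δ ≤ dist · ·) ∧
      κ ≤ F.card * (2 * δ) ^ b :=
  let ⟨F, hF_sub, hF_sep, hF_cover⟩ :=
    exists_finset_pairwise_le_dist_of_totallyBounded h.totallyBounded hδ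
  ⟨F, hF_sub, hF_sep, le_card_mul_rpow_of_forall_exists_dist_le hb hδ hF_cover
    h.le_content_directions⟩

section FarPairs

variable {ρ : ℝ} {F : Finset V}

open Classical in
theorem card_directions_of_farPair_le (h : IsDiscretizedFurstenbergSet a b κ T δ Q L A)
    (hδ : 0 < δ) (hρ : 0 < ρ) (hFL : (F : Set V) ⊆ L)
    (hF : (F : Set V).Pairwise (δ ≤ dist · ·)) (p : V × V) :
    ({e ∈ F | p ∈ farPairs Q (2 * δ) ρ (A e)}.card : ℝ) ≤ (64 / ρ + 1) ^ finrank ℝ V := by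
  set G := {e ∈ F | p ∈ farPairs Q (2 * δ) ρ (A e)}
  rcases G.eq_empty_or_nonempty with h_empty | ⟨e₀, he₀⟩
  · rw [h_empty, Finset.card_empty, Nat.cast_zero]
    positivity
  obtain ⟨he₀F, hp₀⟩ := Finset.mem_filter.1 he₀
  obtain ⟨-, x₀, hx₀, y₀, hy₀, -, hxp₀, hyp₀⟩ := mem_farPairs.1 hp₀
  have h_ball : ∀ e ∈ G, dist e e₀ ≤ 32 * δ / ρ := fun e he => by
    obtain ⟨heF, hp⟩ := Finset.mem_filter.1 he
    obtain ⟨-, x, hx, y, hy, hxy, hxp, hyp⟩ := mem_farPairs.1 hp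
    have h_angle := h.dist_mul_dist_le (hFL heF) (hFL he₀F) hx hy hx₀ hy₀ hxp hyp hxp₀ hyp₀
    rw [le_div_iff₀ hρ]
    nlinarith [dist_nonneg (x := e) (y := e₀)]
  have h_card := card_le_of_pairwise_le_dist hδ (by positivity)
    (hF.mono (Finset.coe_subset.2 (Finset.filter_subset _ _))) h_ball
  rwa [show 2 * (32 * δ / ρ) / δ = 64 / ρ by field_simp; norm_num] at h_card

theorem card_directions_mul_le (h : IsDiscretizedFurstenbergSet a b κ T δ Q L A) (ha : 0 ≤ a)
    (hδ : 0 < δ) (hρ : 0 < ρ) (hρκ : (2 * ρ) ^ a ≤ κ / 2) (hFL : (F : Set V) ⊆ L)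
    (hF : (F : Set V).Pairwise (δ ≤ dist · ·)) :
    F.card * (κ * (κ / 2)) ≤
      Q.card ^ 2 * (64 / ρ + 1) ^ finrank ℝ V * ((2 * (2 * δ)) ^ a) ^ 2 := by
  classical
  have h_above : ∀ e ∈ F, κ * (κ / 2) / ((2 * (2 * δ)) ^ a) ^ 2 ≤
      ((Q ×ˢ Q).bipartiteAbove (fun e p => p ∈ farPairs Q (2 * δ) ρ (A e)) e).card := fun e he => by
    rw [Finset.bipartiteAbove, Finset.filter_mem_eq_inter,
      Finset.inter_eq_right.2 (farPairs_subset _ _ _ _), div_le_iff₀ (by positivity)]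
    exact mul_half_le_card_farPairs_mul ha (by positivity) hρ (h.exists_dist_le e (hFL he))
      (h.le_content e (hFL he)) hρκ
  have h_count := Finset.card_nsmul_le_card_nsmul _ h_above fun p _ =>
    h.card_directions_of_farPair_le hδ hρ hFL hF p
  rw [nsmul_eq_mul, nsmul_eq_mul, mul_div_assoc', div_le_iff₀ (by positivity),
    Finset.card_product] at h_count
  push_cast at h_count
  rwa [sq (Q.card : ℝ)]

theorem mul_mul_half_le_mul_sq_card (h : IsDiscretizedFurstenbergSet a b κ T δ Q L A)
    (ha : 0 ≤ a) (hb : 0 ≤ b) (hκ : 0 ≤ κ) (hδ : 0 < δ) (hρ : 0 < ρ)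
    (hρκ : (2 * ρ) ^ a ≤ κ / 2) :
    κ * (κ * (κ / 2)) ≤
      2 ^ b * (4 ^ a) ^ 2 * (64 / ρ + 1) ^ finrank ℝ V * (δ ^ (a + b / 2) * Q.card) ^ 2 := by
  obtain ⟨F, hFL, hF, hκF⟩ := h.exists_separated_directions hb hδ
  calc κ * (κ * (κ / 2)) ≤ F.card * (2 * δ) ^ b * (κ * (κ / 2)) := by gcongr
    _ = (2 * δ) ^ b * (F.card * (κ * (κ / 2))) := by ring
    _ ≤ (2 * δ) ^ b *
          (Q.card ^ 2 * (64 / ρ + 1) ^ finrank ℝ V * ((2 * (2 * δ)) ^ a) ^ 2) :=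
        mul_le_mul_of_nonneg_left (h.card_directions_mul_le ha hδ hρ hρκ hFL hF) (by positivity)
    _ = (2 * δ) ^ b * ((2 * (2 * δ)) ^ a) ^ 2 * ((64 / ρ + 1) ^ finrank ℝ V * Q.card ^ 2) := by
        ring
    _ = _ := by
        rw [two_mul_rpow_mul_four_mul_rpow_sq _ _ hδ, mul_pow, ← Real.rpow_mul_natCast hδ.le,
          Nat.cast_ofNat, show (a + b / 2) * 2 = 2 * a + b by ring]
        ring

theorem rpow_le_mul_sq_card (h : IsDiscretizedFurstenbergSet a b κ T δ Q L A) (ha : 0 < a)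
    (hb : 0 ≤ b) (hκ_pos : 0 < κ) (hκ_le : κ ≤ 1) (hδ : 0 < δ) :
    (κ / 2) ^ (3 + finrank ℝ V / a) ≤
      2 ^ b * (4 ^ a) ^ 2 * 130 ^ finrank ℝ V * (δ ^ (a + b / 2) * Q.card) ^ 2 := by
  have h_half : 0 < κ / 2 := half_pos hκ_pos
  set w := (κ / 2) ^ a⁻¹
  have hw_pos : 0 < w := Real.rpow_pos_of_pos h_half _
  have hw_le : w ≤ 1 := Real.rpow_le_one h_half.le (by linarith) (inv_nonneg.2 ha.le)
  have hwκ : (2 * (w / 2)) ^ a = κ / 2 := by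
    rw [mul_div_cancel₀ w two_ne_zero, Real.rpow_inv_rpow h_half.le ha.ne']
  have hw_card : w * (64 / (w / 2) + 1) ≤ 130 := by
    field_simp
    linarith
  have h_le := h.mul_mul_half_le_mul_sq_card ha.le hb hκ_pos.le hδ (half_pos hw_pos) hwκ.le
  calc (κ / 2) ^ (3 + finrank ℝ V / a) = (κ / 2) ^ 3 * w ^ finrank ℝ V := by
        rw [Real.rpow_add h_half, ← Real.rpow_mul_natCast h_half.le, div_eq_inv_mul _ a]
        norm_cast
    _ ≤ κ * (κ * (κ / 2)) * w ^ finrank ℝ V := by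
        gcongr
        nlinarith [pow_pos hκ_pos 3]
    _ ≤ 2 ^ b * (4 ^ a) ^ 2 * (64 / (w / 2) + 1) ^ finrank ℝ V *
          (δ ^ (a + b / 2) * Q.card) ^ 2 * w ^ finrank ℝ V := by gcongr
    _ = 2 ^ b * (4 ^ a) ^ 2 * (w * (64 / (w / 2) + 1)) ^ finrank ℝ V *
          (δ ^ (a + b / 2) * Q.card) ^ 2 := by
        rw [mul_pow w]
        ring
    _ ≤ _ := by gcongr

end FarPairs

theorem sum_card_pointsNear_inter_le [DecidableEq V]
    (h : IsDiscretizedFurstenbergSet a b κ T δ Q L A) (hV : finrank ℝ V = 2) (hT : 1 ≤ T)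
    (hδ_pos : 0 < δ) (hδ_le : δ ≤ 1) {n : ℕ} (hn : 2 ≤ 2 ^ n * δ) {F : Finset V}
    (hFL : (F : Set V) ⊆ L) (hF : (F : Set V).Pairwise (δ ≤ dist · ·)) {e : V} (he : e ∈ F) :
    ∑ e' ∈ F, ((pointsNear Q (2 * δ) (A e) ∩ pointsNear Q (2 * δ) (A e')).card : ℝ) ≤
      7 ^ 2 * (128 * T) * ((n + 1) * (2 * 81 / δ)) := by
  have h_ball (i : ℕ) : ({e' ∈ F | dist e e' ≤ 2 ^ i * δ}.card : ℝ) ≤ 81 * 2 ^ i := by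
    have h_card := card_mul_le_of_norm_eq_one (F := {e' ∈ F | dist e e' ≤ 2 ^ i * δ}) (x := e)
      hδ_pos (Nat.one_le_two_pow (n := i))
      (hF.mono (Finset.coe_subset.2 (Finset.filter_subset _ _)))
      (fun e' he' => h.norm_eq_one e' (hFL (Finset.mem_filter.1 he').1)) fun e' he' => by
        simpa [dist_comm] using (Finset.mem_filter.1 he').2
    push_cast [hV] at h_card
    have h_two : (0 : ℝ) < 2 ^ i := by positivity
    nlinarith
  calc ∑ e' ∈ F, ((pointsNear Q (2 * δ) (A e) ∩ pointsNear Q (2 * δ) (A e')).card : ℝ)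
      ≤ ∑ e' ∈ F, 7 ^ 2 * (128 * T) * (max δ (dist e e'))⁻¹ :=
        Finset.sum_le_sum fun e' he' => hV ▸ h.card_pointsNear_inter_le hT hδ_pos hδ_le
          h.pairwise_le_dist (hFL he) (hFL he')
    _ = 7 ^ 2 * (128 * T) * ∑ e' ∈ F, (max δ (dist e e'))⁻¹ := Finset.mul_sum _ _ _ |>.symm
    _ ≤ 7 ^ 2 * (128 * T) * ((n + 1) * (2 * 81 / δ)) := by
        gcongr
        exact sum_inv_max_dist_le hδ_pos
          (fun e' he' => (h.dist_le_two (hFL he) (hFL he')).trans hn) h_ball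

theorem card_directions_mul_sq_le (h : IsDiscretizedFurstenbergSet a b κ T δ Q L A)
    (hV : finrank ℝ V = 2) (ha : 0 ≤ a) (hκ : 0 ≤ κ) (hT : 1 ≤ T)
    (hδ_pos : 0 < δ) (hδ_le : δ ≤ 1) {n : ℕ} (hn : 2 ≤ 2 ^ n * δ) {F : Finset V}
    (hFL : (F : Set V) ⊆ L) (hF : (F : Set V).Pairwise (δ ≤ dist · ·)) :
    F.card * κ ^ 2 ≤ ((2 * (2 * δ)) ^ a) ^ 2 * Q.card *
      (7 ^ 2 * (128 * T) * ((n + 1) * (2 * 81 / δ))) := by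
  classical
  set H := 7 ^ 2 * (128 * T) * ((n + 1) * (2 * 81 / δ))
  let P (e : V) : Finset V := pointsNear Q (2 * δ) (A e)
  have h_lower : F.card * κ ≤ (∑ e ∈ F, ((P e).card : ℝ)) * (2 * (2 * δ)) ^ a := by
    rw [Finset.sum_mul, ← nsmul_eq_mul]
    exact Finset.card_nsmul_le_sum _ _ _ fun e he => le_card_pointsNear_mul_rpow ha (by positivity)
      (h.exists_dist_le e (hFL he)) (h.le_content e (hFL he))
  have h_cauchy : (∑ e ∈ F, ((P e).card : ℝ)) ^ 2 ≤
      Q.card * ∑ e ∈ F, ∑ e' ∈ F, ((P e ∩ P e').card : ℝ) := by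
    exact_mod_cast sq_sum_card_le_card_mul_sum_card_inter fun e _ => pointsNear_subset Q _ (A e)
  have h_rows : ∑ e ∈ F, ∑ e' ∈ F, ((P e ∩ P e').card : ℝ) ≤ F.card * H := by
    rw [← nsmul_eq_mul]
    exact Finset.sum_le_card_nsmul _ _ _ fun e he =>
      h.sum_card_pointsNear_inter_le hV hT hδ_pos hδ_le hn hFL hF he
  have h_sq : F.card * (F.card * κ ^ 2) ≤ F.card * (((2 * (2 * δ)) ^ a) ^ 2 * Q.card * H) :=
    calc F.card * (F.card * κ ^ 2) = (F.card * κ) ^ 2 := by ring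
      _ ≤ ((∑ e ∈ F, ((P e).card : ℝ)) * (2 * (2 * δ)) ^ a) ^ 2 := by gcongr
      _ = (∑ e ∈ F, ((P e).card : ℝ)) ^ 2 * ((2 * (2 * δ)) ^ a) ^ 2 := mul_pow _ _ _
      _ ≤ Q.card * (F.card * H) * ((2 * (2 * δ)) ^ a) ^ 2 := by
        gcongr
        exact h_cauchy.trans (by gcongr)
      _ = F.card * (((2 * (2 * δ)) ^ a) ^ 2 * Q.card * H) := by ring
  rcases F.card.eq_zero_or_pos with h_zero | h_pos
  · rw [h_zero, Nat.cast_zero, zero_mul]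
    positivity
  · exact le_of_mul_le_mul_left h_sq (Nat.cast_pos.2 h_pos)

theorem pow_three_le_mul_card (h : IsDiscretizedFurstenbergSet a b κ T δ Q L A)
    (hV : finrank ℝ V = 2) (ha : 0 ≤ a) (hb : 0 ≤ b) (hκ : 0 ≤ κ) (hT : 1 ≤ T)
    (hδ_pos : 0 < δ) (hδ_le : δ ≤ 1) {n : ℕ} (hn : 2 ≤ 2 ^ n * δ) :
    κ ^ 3 ≤ 7 ^ 2 * 128 * (2 * 81) * (2 ^ b * (4 ^ a) ^ 2) * T * (n + 1) *
      (δ ^ (2 * a + b - 1) * Q.card) := by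
  obtain ⟨F, hFL, hF, hκF⟩ := h.exists_separated_directions hb hδ_pos
  calc κ ^ 3 = κ * κ ^ 2 := pow_succ' κ 2
    _ ≤ F.card * (2 * δ) ^ b * κ ^ 2 := by gcongr
    _ = (2 * δ) ^ b * (F.card * κ ^ 2) := by ring
    _ ≤ (2 * δ) ^ b * (((2 * (2 * δ)) ^ a) ^ 2 * Q.card *
          (7 ^ 2 * (128 * T) * ((n + 1) * (2 * 81 / δ)))) :=
        mul_le_mul_of_nonneg_left (h.card_directions_mul_sq_le hV ha hκ hT hδ_pos hδ_le hn hFL hF)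
          (by positivity)
    _ = (2 * δ) ^ b * ((2 * (2 * δ)) ^ a) ^ 2 / δ *
          (7 ^ 2 * 128 * (2 * 81) * T * (n + 1) * Q.card) := by ring
    _ = _ := by
        rw [two_mul_rpow_mul_four_mul_rpow_sq a b hδ_pos, Real.rpow_sub_one hδ_pos.ne']
        ring

end IsDiscretizedFurstenbergSet

end DiscretizedFurstenbergSet

section Extraction

variable {V : Type*} [NormedAddCommGroup V] [NormedSpace ℝ V] {a b α β s T η : ℝ} {E L : Set V}
  {A : V → Set V}

/-- An `F_{αβ}`-set in a real normed space: it meets a segment in every direction of some set of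
unit vectors of Hausdorff dimension at least `β` in a set of Hausdorff dimension at least `α`. -/
def IsFurstenbergSet (α β : ℝ) (E : Set V) : Prop :=
  ∃ L ⊆ sphere (0 : V) 1, ENNReal.ofReal β ≤ dimH L ∧ ∀ e ∈ L, ∃ (p : V) (u v : ℝ),
    ENNReal.ofReal α ≤ dimH (E ∩ (fun t : ℝ => p + t • e) '' Icc u v)

theorem isSegmentFamily_image_Icc {c : V} {p : V → V} {u v : V → ℝ} (h_norm : L ⊆ sphere 0 1)
    (h_ball : L ⊆ ball c (1 / 2)) (h_length : ∀ e ∈ L, v e - u e ≤ T) :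
    IsSegmentFamily T L fun e => (fun t : ℝ => p e + t • e) '' Icc (u e) (v e) where
  norm_eq_one e he := mem_sphere_zero_iff_norm.1 (h_norm he)
  one_le_norm_add e he e' he' := by
    have h_dist : ‖e - e'‖ < 1 := by
      rw [← dist_eq_norm]
      linarith [dist_triangle_right e e' c, mem_ball.1 (h_ball he), mem_ball.1 (h_ball he')]
    have h_add := norm_add_le (e + e') (e - e')
    rw [show e + e' + (e - e') = (2 : ℝ) • e by module, norm_smul,
      mem_sphere_zero_iff_norm.1 (h_norm he), mul_one, Real.norm_ofNat] at h_add
    linarith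
  exists_add_smul_eq e _ := by
    rintro - ⟨t, -, rfl⟩ - ⟨t', -, rfl⟩
    exact ⟨t' - t, by module⟩
  dist_le e he := by
    rintro - ⟨t, ht, rfl⟩ - ⟨t', ht', rfl⟩
    rw [dist_add_left, dist_eq_norm, ← sub_smul, norm_smul, mem_sphere_zero_iff_norm.1 (h_norm he),
      mul_one, ← dist_eq_norm]
    exact (Real.dist_le_of_mem_Icc ht ht').trans (h_length e he)

theorem IsSegmentFamily.mono {L' : Set V} {A' : V → Set V} (h : IsSegmentFamily T L A)
    (hL : L' ⊆ L) (hA : ∀ e ∈ L', A' e ⊆ A e) : IsSegmentFamily T L' A' where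
  norm_eq_one e he := h.norm_eq_one e (hL he)
  one_le_norm_add e he e' he' := h.one_le_norm_add e (hL he) e' (hL he')
  exists_add_smul_eq e he x hx y hy := h.exists_add_smul_eq e (hL he) x (hA e he hx) y (hA e he hy)
  dist_le e he x hx y hy := h.dist_le e (hL he) x (hA e he hx) y (hA e he hy)

theorem exists_nat_le_add_one_and_ofReal_lt (l : ℝ) {x : ℝ≥0∞} (hx : 0 < x) :
    ∃ m : ℕ, l ≤ m + 1 ∧ ENNReal.ofReal (1 / (m + 1)) < x := by
  have h_tendsto := ENNReal.tendsto_ofReal (tendsto_one_div_add_atTop_nhds_zero_nat (𝕜 := ℝ))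
  rw [ENNReal.ofReal_zero] at h_tendsto
  obtain ⟨m, hm, hmx⟩ := ((tendsto_natCast_atTop_atTop.eventually_ge_atTop l).and
    (h_tendsto.eventually_lt_const hx)).exists
  exact ⟨m, hm.trans (le_add_of_nonneg_right zero_le_one), hmx⟩

theorem IsFurstenbergSet.exists_isSegmentFamily [TopologicalSpace.SeparableSpace V]
    (hE : IsFurstenbergSet α β E) (ha : 0 < a) (haα : a < α) (hb : 0 < b) (hbβ : b < β) :
    ∃ η > 0, ∃ T ≥ 1, ∃ (L : Set V) (A : V → Set V), IsSegmentFamily T L A ∧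
      (∀ e ∈ L, A e ⊆ E) ∧ ENNReal.ofReal η < hausdorffContent b L ∧
      ∀ e ∈ L, ENNReal.ofReal η < hausdorffContent a (A e) := by
  obtain ⟨L, hL_norm, hL_dim, hL⟩ := hE
  choose! p u v hA_dim using hL
  let A (e : V) : Set V := E ∩ (fun t : ℝ => p e + t • e) '' Icc (u e) (v e)
  let B (i : ℕ × ℕ) : Set V := ball (TopologicalSpace.denseSeq V i.1) (1 / 2) ∩
    {e | v e - u e ≤ i.2 + 1 ∧ ENNReal.ofReal (1 / (i.2 + 1)) < hausdorffContent a (A e)}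
  have h_lt {x y : ℝ} (hx : 0 < x) (hxy : x < y) : ENNReal.ofReal x < ENNReal.ofReal y :=
    (ENNReal.ofReal_lt_ofReal_iff (hx.trans hxy)).2 hxy
  have h_cover : L ⊆ ⋃ i, B i := fun e he => by
    obtain ⟨n, hn⟩ := (TopologicalSpace.denseRange_denseSeq V).exists_dist_lt e one_half_pos
    obtain ⟨m, h_length, h_content⟩ := exists_nat_le_add_one_and_ofReal_lt (v e - u e)
      (hausdorffContent_pos_of_lt_dimH ha ((h_lt ha haα).trans_le (hA_dim e he)))
    exact mem_iUnion.2 ⟨(n, m), hn, h_length, h_content⟩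
  obtain ⟨⟨n, m⟩, h_pos⟩ := exists_lt_measure_inter (hausdorffContent b) (w := 0) h_cover (by
    simpa using hausdorffContent_pos_of_lt_dimH hb ((h_lt hb hbβ).trans_le hL_dim))
  obtain ⟨η, -, hη, hηL⟩ := ENNReal.lt_iff_exists_real_btwn.1 h_pos
  refine ⟨min η (1 / (m + 1)), lt_min (ENNReal.ofReal_pos.1 hη) (by positivity), m + 1, by simp,
    L ∩ B (n, m), A, ?_, fun e _ => inter_subset_left, ?_, fun e he => ?_⟩
  · exact (isSegmentFamily_image_Icc (inter_subset_left.trans hL_norm)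
      (fun e he => he.2.1) fun e he => he.2.2.1).mono Subset.rfl fun e _ => inter_subset_right
  · exact (ENNReal.ofReal_le_ofReal (min_le_left _ _)).trans_lt hηL
  · exact (ENNReal.ofReal_le_ofReal (min_le_right _ _)).trans_lt he.2.2.2

theorem IsSegmentFamily.exists_isDiscretizedFurstenbergSet (h : IsSegmentFamily T L A)
    {κ : ℕ → ℝ} (hs : 0 < s) (hE : hausdorffContent s E = 0) (hAE : ∀ e ∈ L, A e ⊆ E)
    (hL : ∑' k, ENNReal.ofReal (κ k) < hausdorffContent b L)
    (hA : ∀ e ∈ L, ∑' k, ENNReal.ofReal (κ k) < hausdorffContent a (A e)) (k₀ : ℕ) :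
    ∃ k ≥ k₀, ∃ (Q : Finset V) (L' : Set V) (A' : V → Set V),
      Q.card * ((1 / 2 : ℝ) ^ k) ^ s ≤ 1 ∧
      IsDiscretizedFurstenbergSet a b (κ k) T ((1 / 2) ^ k) Q L' A' := by
  obtain ⟨Q, hQ_card, hQ_sep, hQ⟩ := exists_dyadic_nets_of_hausdorffContent_eq_zero hs hE k₀
  let B (k : Ici k₀) : Set V := {x | ∃ q ∈ Q k, dist x q ≤ 2 * (1 / 2) ^ (k : ℕ)}
  have h_tsum : ∑' k : Ici k₀, ENNReal.ofReal (κ k) ≤ ∑' k, ENNReal.ofReal (κ k) :=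
    ENNReal.tsum_comp_le_tsum_of_injective Subtype.val_injective _
  have h_slice : ∀ e ∈ L, ∃ k : Ici k₀,
      ENNReal.ofReal (κ k) < hausdorffContent a (A e ∩ B k) := fun e he =>
    exists_lt_measure_inter _ (fun x hx => by
      obtain ⟨k, hk, hxk⟩ := hQ x (hAE e he hx)
      exact mem_iUnion.2 ⟨⟨k, hk⟩, hxk⟩) (h_tsum.trans_lt (hA e he))
  obtain ⟨k, hk⟩ := exists_lt_measure_inter (hausdorffContent b)
    (B := fun k : Ici k₀ => {e | ENNReal.ofReal (κ k) < hausdorffContent a (A e ∩ B k)})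
    (fun e he => mem_iUnion.2 (h_slice e he)) (h_tsum.trans_lt hL)
  refine ⟨k, k.2, Q k, _, fun e => A e ∩ B k, hQ_card k,
    h.mono inter_subset_left fun e _ => inter_subset_left, hQ_sep k, ?_, hk.le, ?_⟩
  · exact fun e _ x hx => hx.2
  · exact fun e he => he.2.le

theorem exists_tsum_ofReal_div_sq_le (hη : 0 < η) :
    ∃ c ∈ Ioc (0 : ℝ) 1, ∑' k : ℕ, ENNReal.ofReal (c / (k + 1) ^ 2) ≤ ENNReal.ofReal η := by
  have h_summable : Summable fun k : ℕ => 1 / ((k : ℝ) + 1) ^ 2 := by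
    simpa using (summable_nat_add_iff 1).2 (Real.summable_one_div_nat_pow.2 one_lt_two)
  set S := ∑' k : ℕ, 1 / ((k : ℝ) + 1) ^ 2
  have hS : 0 < S := h_summable.tsum_pos (fun k => by positivity) 0 (by norm_num)
  refine ⟨min 1 (η / S), ⟨by positivity, min_le_left _ _⟩, ?_⟩
  have h_tsum : ∑' k : ℕ, min 1 (η / S) / ((k : ℝ) + 1) ^ 2 = min 1 (η / S) * S := by
    simp only [div_eq_mul_one_div (min 1 (η / S)), tsum_mul_left, S]
  rw [← ENNReal.ofReal_tsum_of_nonneg (fun k => by positivity) (by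
    simpa only [div_eq_mul_one_div (min 1 (η / S))] using h_summable.mul_left _), h_tsum]
  exact ENNReal.ofReal_le_ofReal ((le_div_iff₀ hS).1 (min_le_right _ _))

end Extraction

section DimensionBounds

open Module (finrank)

variable {V : Type*} [NormedAddCommGroup V] [NormedSpace ℝ V] {α β : ℝ} {E : Set V}

theorem eventually_mul_half_pow_rpow_lt {c η : ℝ} (hc : 0 < c) (hη : 0 < η) (C p : ℝ) :
    ∀ᶠ k : ℕ in Filter.atTop, C * ((1 / 2 : ℝ) ^ k) ^ η < (c / (k + 1) ^ 2) ^ p := by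
  have h_log : 0 < η * Real.log 2 := mul_pos hη (Real.log_pos one_lt_two)
  have h_tendsto := ((tendsto_rpow_mul_exp_neg_mul_atTop_nhds_zero (2 * p) _ h_log).const_mul
    (C * 2 ^ η / c ^ p)).comp (tendsto_natCast_atTop_atTop.comp (Filter.tendsto_add_atTop_nat 1))
  rw [mul_zero] at h_tendsto
  filter_upwards [h_tendsto.eventually_lt_const one_pos] with k hk
  have hk_pos : (0 : ℝ) < k + 1 := by positivity
  have h_exp : ((1 / 2 : ℝ) ^ k) ^ η = 2 ^ η * Real.exp (-(η * Real.log 2) * (k + 1)) := by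
    rw [← Real.rpow_natCast, ← Real.rpow_mul (by norm_num), Real.rpow_def_of_pos (by norm_num),
      Real.rpow_def_of_pos two_pos, ← Real.exp_add, one_div, Real.log_inv]
    ring_nf
  have h_weight : (c / ((k : ℝ) + 1) ^ 2) ^ p = c ^ p / (k + 1) ^ (2 * p) := by
    rw [Real.div_rpow hc.le (by positivity), Real.rpow_mul hk_pos.le, Real.rpow_two]
  simp only [Function.comp_apply, Nat.cast_add_one] at hk
  rw [h_exp, h_weight, lt_div_iff₀ (by positivity)]
  calc _ = C * 2 ^ η / c ^ p * ((k + 1) ^ (2 * p) * Real.exp (-(η * Real.log 2) * (k + 1))) *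
        c ^ p := by field_simp
    _ < 1 * c ^ p := by gcongr
    _ = c ^ p := one_mul _

theorem IsFurstenbergSet.ofReal_le_dimH_of_lt [TopologicalSpace.SeparableSpace V]
    (hE : IsFurstenbergSet α β E) {a b γ : ℝ} {m : ℕ} (hm : m ≠ 0) (ha : 0 < a) (haα : a < α)
    (hb : 0 < b) (hbβ : b < β)
    (h_bound : ∀ T ≥ 1, ∃ C ≥ 0, ∃ p : ℝ, ∀ (k : ℕ) (κ : ℝ) (Q : Finset V) (L : Set V)
      (A : V → Set V), 0 < κ → κ * (k + 1) ≤ 1 →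
      IsDiscretizedFurstenbergSet a b κ T ((1 / 2) ^ k) Q L A →
      κ ^ p ≤ C * (((1 / 2 : ℝ) ^ k) ^ γ * Q.card) ^ m) :
    ENNReal.ofReal γ ≤ dimH E := by
  obtain ⟨η, hη, T, hT, L, A, hLA, hAE, hL, hA⟩ := hE.exists_isSegmentFamily ha haα hb hbβ
  obtain ⟨c, ⟨hc_pos, hc_le⟩, hc⟩ := exists_tsum_ofReal_div_sq_le hη
  obtain ⟨C, hC, p, h_bound⟩ := h_bound T hT
  by_contra! h_dim
  obtain ⟨s, -, hs, hsγ⟩ := ENNReal.lt_iff_exists_real_btwn.1 h_dim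
  have hs_pos : 0 < s := ENNReal.ofReal_pos.1 (bot_le.trans_lt hs)
  have h_gap : 0 < (γ - s) * m :=
    mul_pos (sub_pos.2 (ENNReal.ofReal_lt_ofReal_iff'.1 hsγ).1) (Nat.cast_pos.2 hm.bot_lt)
  obtain ⟨k₀, hk₀⟩ := Filter.eventually_atTop.1 (eventually_mul_half_pow_rpow_lt hc_pos h_gap C p)
  obtain ⟨k, hk, Q, L', A', hQ, h⟩ := hLA.exists_isDiscretizedFurstenbergSet hs_pos
    (hausdorffContent_eq_zero_of_dimH_lt hs_pos hs) hAE (hc.trans_lt hL)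
    (fun e he => hc.trans_lt (hA e he)) k₀
  have hδ : (0 : ℝ) < (1 / 2) ^ k := by positivity
  have h_weight : c / ((k : ℝ) + 1) ^ 2 * (k + 1) ≤ 1 := by
    rw [div_mul_eq_mul_div, div_le_one (by positivity)]
    nlinarith [(Nat.cast_nonneg k : (0 : ℝ) ≤ k)]
  refine (hk₀ k hk).not_ge ?_
  calc _ ≤ C * (((1 / 2 : ℝ) ^ k) ^ γ * Q.card) ^ m :=
        h_bound k _ Q L' A' (by positivity) h_weight h
    _ = C * (((1 / 2 : ℝ) ^ k) ^ (γ - s) * (Q.card * ((1 / 2) ^ k) ^ s)) ^ m := by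
        rw [mul_left_comm, ← Real.rpow_add hδ, sub_add_cancel, mul_comm (Q.card : ℝ)]
    _ ≤ C * (((1 / 2 : ℝ) ^ k) ^ (γ - s) * 1) ^ m := by gcongr
    _ = C * ((1 / 2 : ℝ) ^ k) ^ ((γ - s) * m) := by rw [mul_one, Real.rpow_mul_natCast hδ.le]

theorem ofReal_le_of_forall_lt {γ : ℝ × ℝ → ℝ} (hγ : Continuous γ) (hα : 0 < α) (hβ : 0 < β)
    {x : ℝ≥0∞} (h : ∀ a b, 0 < a → a < α → 0 < b → b < β → ENNReal.ofReal (γ (a, b)) ≤ x) :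
    ENNReal.ofReal (γ (α, β)) ≤ x := by
  have h_mem : (α, β) ∈ closure (Ioo 0 α ×ˢ Ioo 0 β) := by
    rw [closure_prod_eq, closure_Ioo hα.ne, closure_Ioo hβ.ne]
    exact ⟨right_mem_Icc.2 hα.le, right_mem_Icc.2 hβ.le⟩
  have h_closed : IsClosed {p | ENNReal.ofReal (γ p) ≤ x} :=
    isClosed_le (ENNReal.continuous_ofReal.comp hγ) continuous_const
  exact closure_minimal (fun p hp => h p.1 p.2 hp.1.1 hp.1.2 hp.2.1 hp.2.2) h_closed h_mem

theorem IsFurstenbergSet.add_half_le_dimH [FiniteDimensional ℝ V] (hE : IsFurstenbergSet α β E)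
    (hα : 0 < α) (hβ : 0 < β) : ENNReal.ofReal (α + β / 2) ≤ dimH E := by
  have : ProperSpace V := FiniteDimensional.proper ℝ V
  refine ofReal_le_of_forall_lt (γ := fun p => p.1 + p.2 / 2) (by fun_prop) hα hβ
    fun a b ha haα hb hbβ => hE.ofReal_le_dimH_of_lt two_ne_zero ha haα hb hbβ fun T _ => ?_
  set p := 3 + finrank ℝ V / a
  refine ⟨2 ^ p * (2 ^ b * (4 ^ a) ^ 2 * 130 ^ finrank ℝ V), by positivity, p,
    fun k κ Q L A hκ hκk h => ?_⟩
  have hκ_le : κ ≤ 1 := by nlinarith [(Nat.cast_nonneg k : (0 : ℝ) ≤ k)]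
  calc κ ^ p = 2 ^ p * (κ / 2) ^ p := by
        rw [← Real.mul_rpow two_pos.le (half_pos hκ).le, mul_div_cancel₀ κ two_ne_zero]
    _ ≤ 2 ^ p * (2 ^ b * (4 ^ a) ^ 2 * 130 ^ finrank ℝ V *
          (((1 / 2 : ℝ) ^ k) ^ (a + b / 2) * Q.card) ^ 2) := by
        gcongr
        exact h.rpow_le_mul_sq_card ha hb.le hκ hκ_le (by positivity)
    _ = _ := (mul_assoc _ _ _).symm

theorem IsFurstenbergSet.two_mul_add_sub_one_le_dimH (hV : finrank ℝ V = 2)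
    (hE : IsFurstenbergSet α β E) (hα : 0 < α) (hβ : 0 < β) :
    ENNReal.ofReal (2 * α + β - 1) ≤ dimH E := by
  have : FiniteDimensional ℝ V := Module.finite_of_finrank_eq_succ hV
  have : ProperSpace V := FiniteDimensional.proper ℝ V
  refine ofReal_le_of_forall_lt (γ := fun p => 2 * p.1 + p.2 - 1) (by fun_prop) hα hβ
    fun a b ha haα hb hbβ => hE.ofReal_le_dimH_of_lt one_ne_zero ha haα hb hbβ fun T hT => ?_
  set C := 7 ^ 2 * 128 * (2 * 81) * (2 ^ b * (4 ^ a) ^ 2) * T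
  refine ⟨C * 2, by positivity, 4, fun k κ Q L A hκ hκk h => ?_⟩
  have hδ_le : (1 / 2 : ℝ) ^ k ≤ 1 := pow_le_one₀ (by norm_num) (by norm_num)
  have h_scale : (2 : ℝ) ≤ 2 ^ (k + 1) * (1 / 2) ^ k := by
    rw [pow_succ', mul_assoc, ← mul_pow]
    norm_num
  have h_cube := h.pow_three_le_mul_card hV ha.le hb.le hκ.le hT (by positivity) hδ_le h_scale
  set N := ((1 / 2 : ℝ) ^ k) ^ (2 * a + b - 1) * Q.card
  have h_log : κ * ((k + 1 : ℕ) + 1) ≤ 2 := by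
    push_cast
    nlinarith [(Nat.cast_nonneg k : (0 : ℝ) ≤ k)]
  calc κ ^ (4 : ℝ) = κ * κ ^ 3 := by
        norm_cast
        exact pow_succ' κ 3
    _ ≤ κ * (C * ((k + 1 : ℕ) + 1) * N) := by gcongr
    _ = C * (κ * ((k + 1 : ℕ) + 1)) * N := by ring
    _ ≤ C * 2 * N ^ 1 := by
      rw [pow_one]
      gcongr

theorem stmt0_general (hV : finrank ℝ V = 2) (hα : 0 < α) (hβ : 0 < β)
    (hE : IsFurstenbergSet α β E) :
    ENNReal.ofReal (max (α + β / 2) (2 * α + β - 1)) ≤ dimH E := by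
  have : FiniteDimensional ℝ V := Module.finite_of_finrank_eq_succ hV
  rw [ENNReal.ofReal_max]
  exact max_le (hE.add_half_le_dimH hα hβ) (hE.two_mul_add_sub_one_le_dimH hV hα hβ)

end DimensionBounds

theorem stmt0 (α β : ℝ) (hα : α ∈ Set.Ioc (0:ℝ) 1) (hβ : β ∈ Set.Ioc (0:ℝ) 1) (E : Set E2)
    (hE : ∃ L ⊆ Metric.sphere (0 : E2) 1, ENNReal.ofReal β ≤ dimH L ∧
      ∀ e ∈ L, ∃ ℓ : Set E2, IsSegment ℓ e ∧ ENNReal.ofReal α ≤ dimH (E ∩ ℓ)) :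
    ENNReal.ofReal (max (α + β / 2) (2 * α + β - 1)) ≤ dimH E := by
  refine stmt0_general finrank_euclideanSpace_fin hα.1 hβ.1
    (hE.imp fun L hL => ⟨hL.1, hL.2.1, fun e he => ?_⟩)
  obtain ⟨-, ⟨p, u, v, -, rfl⟩, h_dim⟩ := hL.2.2 e he
  exact ⟨p, u, v, h_dim⟩
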